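/- Let γ ∈ (0,1], R ∈ (0,1), c₂ > 0, and μ_s > 0. Then there exist a constant c̃' > 0 and n₀ such that for every integer n ≥ n₀ with nR ∈ ℕ and n(1−R) a positive integer, the following holds. Set ε* = 1 − R − c₂ n^{−γ}, let P_e : [0,1] → [0,1] be any nondecreasing function with P_e(ε) ≤ 1 − (1−ε)^n for all ε and P_e(ε*) ≤ n^{−9}, and define T_K = 1/(nR) + (1/(μ_s n R)) ∫_0^1 (P_e(ε)/ε) dε and T_MDS = 1/(nR) + (1/(μ_s n R)) Σ_{i=n(1−R)+1}^{n} 1/i. Then n·T_K − n·T_MDS ≤ c̃' · n^{−γ}. -/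

import Mathlib

open MeasureTheory

/-!
After the common terms cancel, the normalized gap is `(I - S) / (μs R)` with
`I = ∫₀¹ Pe(ε)/ε dε` and `S = ∑_{j < i ≤ n} 1/i`. Split `I` at `ε*/n²` and at `ε*`: the union bound
`Pe(ε) ≤ nε` controls the first piece by `1/n`, the smallness of `Pe(ε*)` and monotonicity make the
middle piece at most `2 Pe(ε*) log n`, and `Pe ≤ 1` bounds the last piece by `-log ε*`.
Comparing `S` with an integral gives `S ≥ log (n/j) - 1/j = -log (1 - R) - 1/(n(1 - R))`.
The two logarithms differ by `O(n^{-γ})` because `ε*` is within `O(n^{-γ})` of `1 - R`.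
-/

lemma log_sub_log_le_of_half_le {r b : ℝ} (hr : 0 < r) (hb : r / 2 ≤ b) :
    Real.log r - Real.log b ≤ 2 * |r - b| / r := by
  have hb₀ : 0 < b := by linarith
  calc Real.log r - Real.log b = Real.log (r / b) := (Real.log_div hr.ne' hb₀.ne').symm
    _ ≤ r / b - 1 := Real.log_le_sub_one_of_pos (by positivity)
    _ = (r - b) / b := by field_simp
    _ ≤ |r - b| / (r / 2) := by gcongr; exact le_abs_self _
    _ = 2 * |r - b| / r := by field_simp

lemma log_div_sub_inv_le_sum_Ioc {j n : ℕ} (hj : 0 < j) (hjn : j ≤ n) :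
    Real.log (n / j) - (j : ℝ)⁻¹ ≤ ∑ i ∈ Finset.Ioc j n, (1 : ℝ) / i := by
  have hj₀ : (0 : ℝ) < j := by exact_mod_cast hj
  have hn₀ : (0 : ℝ) < n := by exact_mod_cast hj.trans_le hjn
  have hanti : AntitoneOn (fun x : ℝ => x⁻¹) (Set.Icc (j : ℝ) n) :=
    fun x hx _ _ hxy => inv_anti₀ (hj₀.trans_le hx.1) hxy
  have hlog : Real.log (n / j) ≤ ∑ i ∈ Finset.Ico j n, (i : ℝ)⁻¹ := by
    rw [← integral_inv_of_pos hj₀ hn₀]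
    exact hanti.integral_le_sum_Ico hjn
  have hshift : ∑ i ∈ Finset.Ico j n, (i : ℝ)⁻¹ + (n : ℝ)⁻¹ =
      (j : ℝ)⁻¹ + ∑ i ∈ Finset.Ioc j n, (i : ℝ)⁻¹ := by
    rw [Finset.sum_Ico_add_eq_sum_Icc hjn,
      Finset.add_sum_Ioc_eq_sum_Icc (f := fun i : ℕ => (i : ℝ)⁻¹) hjn]
  have hn_inv : 0 ≤ (n : ℝ)⁻¹ := by positivity
  simp only [one_div]
  linarith

lemma intervalIntegral_div_self_le_mul_log {f : ℝ → ℝ} {a b p : ℝ} (ha : 0 < a) (hab : a ≤ b)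
    (hint : IntervalIntegrable (fun x => f x / x) volume a b)
    (hf : ∀ x ∈ Set.Icc a b, f x ≤ p) :
    ∫ x in a..b, f x / x ≤ p * Real.log (b / a) := by
  have hpos : ∀ x ∈ Set.Icc a b, 0 < x := fun x hx => ha.trans_le hx.1
  have hinv : IntervalIntegrable (fun x : ℝ => x⁻¹) volume a b :=
    intervalIntegral.intervalIntegrable_inv
      (fun x hx => (hpos x (Set.uIcc_of_le hab ▸ hx)).ne') continuousOn_id
  rw [← integral_inv_of_pos ha (ha.trans_le hab), ← intervalIntegral.integral_const_mul]
  refine intervalIntegral.integral_mono_on hab hint (hinv.const_mul p) fun x hx => ?_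
  rw [div_eq_mul_inv]
  exact mul_le_mul_of_nonneg_right (hf x hx) (inv_nonneg.2 (hpos x hx).le)

lemma intervalIntegrable_div_self_of_monotoneOn {f : ℝ → ℝ} {b L : ℝ} (hb : 0 ≤ b)
    (hmono : MonotoneOn f (Set.Icc 0 b)) (hnonneg : ∀ x ∈ Set.Icc 0 b, 0 ≤ f x)
    (hlin : ∀ x ∈ Set.Icc 0 b, f x ≤ L * x) :
    IntervalIntegrable (fun x => f x / x) volume 0 b := by
  have hmeas : AEStronglyMeasurable (fun x => f x / x) (volume.restrict (Set.uIoc 0 b)) := by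
    have hf : IntervalIntegrable f volume 0 b :=
      MonotoneOn.intervalIntegrable (by rwa [Set.uIcc_of_le hb])
    exact (hf.def'.aestronglyMeasurable.aemeasurable.div aemeasurable_id).aestronglyMeasurable
  refine (intervalIntegrable_const (c := L)).mono_fun' hmeas ?_
  filter_upwards [ae_restrict_mem measurableSet_uIoc] with x hx
  rw [Set.uIoc_of_le hb] at hx
  have hxb : x ∈ Set.Icc 0 b := Set.Ioc_subset_Icc_self hx
  rw [Real.norm_of_nonneg (div_nonneg (hnonneg x hxb) hx.1.le), div_le_iff₀ hx.1]
  exact hlin x hxb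

lemma intervalIntegral_div_self_le {f : ℝ → ℝ} {L a b : ℝ}
    (hmono : MonotoneOn f (Set.Icc 0 1)) (hrange : ∀ x ∈ Set.Icc 0 1, f x ∈ Set.Icc (0 : ℝ) 1)
    (hlin : ∀ x ∈ Set.Icc 0 1, f x ≤ L * x) (ha : 0 < a) (hab : a ≤ b) (hb : b ≤ 1) :
    ∫ x in (0 : ℝ)..1, f x / x ≤ L * a + f b * Real.log (b / a) - Real.log b := by
  have hb₀ : 0 < b := ha.trans_le hab
  have hint : IntervalIntegrable (fun x => f x / x) volume 0 1 :=
    intervalIntegrable_div_self_of_monotoneOn zero_le_one hmono (fun x hx => (hrange x hx).1) hlin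
  have hint_sub {c d : ℝ} (hc : 0 ≤ c) (hcd : c ≤ d) (hd : d ≤ 1) :
      IntervalIntegrable (fun x => f x / x) volume c d :=
    hint.mono_set (by
      simpa only [Set.uIcc_of_le hcd, Set.uIcc_of_le zero_le_one] using Set.Icc_subset_Icc hc hd)
  have hint₀ := hint_sub le_rfl ha.le (hab.trans hb)
  have hint₁ := hint_sub ha.le hab hb
  have hint₂ := hint_sub hb₀.le hb le_rfl
  have hleft : ∫ x in (0 : ℝ)..a, f x / x ≤ L * a := by
    have hle : ∀ x ∈ Set.Ioo 0 a, f x / x ≤ L := fun x hx =>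
      (div_le_iff₀ hx.1).2 (hlin x ⟨hx.1.le, hx.2.le.trans (hab.trans hb)⟩)
    calc ∫ x in (0 : ℝ)..a, f x / x ≤ ∫ _ in (0 : ℝ)..a, L :=
          intervalIntegral.integral_mono_on_of_le_Ioo ha.le hint₀ intervalIntegrable_const hle
      _ = L * a := by rw [intervalIntegral.integral_const, smul_eq_mul, sub_zero, mul_comm]
  have hmiddle : ∫ x in a..b, f x / x ≤ f b * Real.log (b / a) :=
    intervalIntegral_div_self_le_mul_log ha hab hint₁ fun x hx =>
      hmono ⟨ha.le.trans hx.1, hx.2.trans hb⟩ ⟨hb₀.le, hb⟩ hx.2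
  have hright : ∫ x in b..1, f x / x ≤ 1 * Real.log (1 / b) :=
    intervalIntegral_div_self_le_mul_log hb₀ hb hint₂ fun x hx =>
      (hrange x ⟨hb₀.le.trans hx.1, hx.2⟩).2
  rw [one_mul, one_div, Real.log_inv] at hright
  rw [← intervalIntegral.integral_add_adjacent_intervals hint₀ (hint₁.trans hint₂),
    ← intervalIntegral.integral_add_adjacent_intervals hint₁ hint₂]
  linarith

lemma inv_le_rpow_neg {x γ : ℝ} (hx : 1 ≤ x) (hγ : γ ≤ 1) : x⁻¹ ≤ x ^ (-γ) := by
  rw [← Real.rpow_neg_one]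
  exact Real.rpow_le_rpow_of_exponent_le hx (neg_le_neg hγ)

lemma rpow_neg_mul_log_le {x γ s : ℝ} (hx : 0 < x) (hs : γ < s) :
    x ^ (-s) * Real.log x ≤ (s - γ)⁻¹ * x ^ (-γ) := by
  calc x ^ (-s) * Real.log x ≤ x ^ (-s) * (x ^ (s - γ) / (s - γ)) := by
        gcongr
        exact Real.log_le_rpow_div hx.le (sub_pos.2 hs)
    _ = (s - γ)⁻¹ * x ^ (-s + (s - γ)) := by rw [Real.rpow_add hx]; ring
    _ = (s - γ)⁻¹ * x ^ (-γ) := by ring_nf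

lemma intervalIntegral_div_self_le_sub_log {f : ℝ → ℝ} {L γ s b : ℝ} (hL : 1 ≤ L) (hγ : γ ≤ 1)
    (hs : γ < s) (hb₀ : 0 < b) (hb : b ≤ 1) (hmono : MonotoneOn f (Set.Icc 0 1))
    (hrange : ∀ x ∈ Set.Icc 0 1, f x ∈ Set.Icc (0 : ℝ) 1)
    (hlin : ∀ x ∈ Set.Icc 0 1, f x ≤ L * x) (hfb : f b ≤ L ^ (-s)) :
    ∫ x in (0 : ℝ)..1, f x / x ≤ (1 + 2 * (s - γ)⁻¹) * L ^ (-γ) - Real.log b := by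
  have hL₀ : 0 < L := by linarith
  have hleft : L * (b / L ^ 2) ≤ L ^ (-γ) :=
    calc L * (b / L ^ 2) = b * L⁻¹ := by field_simp
      _ ≤ 1 * L⁻¹ := by gcongr
      _ ≤ L ^ (-γ) := by rw [one_mul]; exact inv_le_rpow_neg hL hγ
  have hmiddle : f b * Real.log (b / (b / L ^ 2)) ≤ 2 * ((s - γ)⁻¹ * L ^ (-γ)) :=
    calc f b * Real.log (b / (b / L ^ 2)) = 2 * (f b * Real.log L) := by
          rw [div_div_cancel₀ hb₀.ne', Real.log_pow]; push_cast; ring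
      _ ≤ 2 * (L ^ (-s) * Real.log L) := by
          gcongr
          exact Real.log_nonneg hL
      _ ≤ 2 * ((s - γ)⁻¹ * L ^ (-γ)) :=
          mul_le_mul_of_nonneg_left (rpow_neg_mul_log_le hL₀ hs) zero_le_two
  have hsplit := intervalIntegral_div_self_le hmono hrange hlin (a := b / L ^ 2) (by positivity)
    (div_le_self hb₀.le (one_le_pow₀ hL)) hb
  linarith

lemma intervalIntegral_div_self_sub_sum_Ioc_le {f : ℝ → ℝ} {j n : ℕ} {γ r s b : ℝ} (hn : 1 ≤ n)
    (hγ : γ ≤ 1) (hs : γ < s) (hr : r ∈ Set.Ioc 0 1) (hj : (j : ℝ) = n * r)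
    (hb : b ∈ Set.Icc (r / 2) 1) (hmono : MonotoneOn f (Set.Icc 0 1))
    (hrange : ∀ x ∈ Set.Icc 0 1, f x ∈ Set.Icc (0 : ℝ) 1)
    (hlin : ∀ x ∈ Set.Icc 0 1, f x ≤ n * x) (hfb : f b ≤ (n : ℝ) ^ (-s)) :
    (∫ x in (0 : ℝ)..1, f x / x) - ∑ i ∈ Finset.Ioc j n, (1 : ℝ) / i ≤
      (1 + 2 * (s - γ)⁻¹ + r⁻¹) * (n : ℝ) ^ (-γ) + 2 * |r - b| / r := by
  obtain ⟨hr₀, hr₁⟩ := hr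
  have hn' : (1 : ℝ) ≤ n := by exact_mod_cast hn
  have hn₀ : (0 : ℝ) < n := by linarith
  have hj₀ : 0 < j := by
    have : (0 : ℝ) < j := hj ▸ mul_pos hn₀ hr₀
    exact_mod_cast this
  have hjn : j ≤ n := by
    have : (j : ℝ) ≤ n := hj ▸ mul_le_of_le_one_right hn₀.le hr₁
    exact_mod_cast this
  have hintegral := intervalIntegral_div_self_le_sub_log hn' hγ hs (by linarith [hb.1]) hb.2
    hmono hrange hlin hfb
  have hsum := log_div_sub_inv_le_sum_Ioc hj₀ hjn
  have hlog_ratio : Real.log (n / j) = -Real.log r := by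
    rw [hj, div_mul_cancel_left₀ hn₀.ne', Real.log_inv]
  have hj_inv : (j : ℝ)⁻¹ ≤ r⁻¹ * (n : ℝ) ^ (-γ) := by
    rw [hj, mul_inv_rev]
    gcongr
    exact inv_le_rpow_neg hn' hγ
  have hlog := log_sub_log_le_of_half_le hr₀ hb.1
  linarith

lemma one_sub_one_sub_pow_le_mul {x : ℝ} (hx : x ≤ 2) (n : ℕ) : 1 - (1 - x) ^ n ≤ n * x := by
  have := one_add_mul_le_pow (a := -x) (by linarith) n
  rw [← sub_eq_add_neg] at this
  linarith

lemma tendsto_sub_mul_natCast_rpow_neg (a c : ℝ) {γ : ℝ} (hγ : 0 < γ) :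
    Filter.Tendsto (fun n : ℕ => a - c * (n : ℝ) ^ (-γ)) Filter.atTop (nhds a) := by
  have hpow := (tendsto_rpow_neg_atTop hγ).comp (tendsto_natCast_atTop_atTop (R := ℝ))
  simpa only [Function.comp_apply, mul_zero, sub_zero] using (hpow.const_mul c).const_sub a

theorem gap_to_optimum_large_kernels_general (γ R c₂ μs s : ℝ)
    (hγ : γ ∈ Set.Ioc (0 : ℝ) 1) (hR : R ∈ Set.Ioo (0 : ℝ) 1) (hμs : 0 < μs) (hs : γ < s) :
    ∃ c' : ℝ, 0 < c' ∧ ∃ n₀ : ℕ, ∀ n : ℕ, n₀ ≤ n → ∀ j : ℕ, (j : ℝ) = (n : ℝ) * (1 - R) →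
      ∀ Pe : ℝ → ℝ, MonotoneOn Pe (Set.Icc (0 : ℝ) 1) →
        (∀ ε ∈ Set.Icc (0 : ℝ) 1, Pe ε ∈ Set.Icc (0 : ℝ) 1) →
        (∀ ε ∈ Set.Icc (0 : ℝ) 1, Pe ε ≤ n * ε) →
        Pe (1 - R - c₂ * (n : ℝ) ^ (-γ)) ≤ (n : ℝ) ^ (-s) →
        (n : ℝ) * (1 / ((n : ℝ) * R) +
            (1 / (μs * (n : ℝ) * R)) * ∫ ε in Set.Ioc (0 : ℝ) 1, Pe ε / ε) -
          (n : ℝ) * (1 / ((n : ℝ) * R) +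
            (1 / (μs * (n : ℝ) * R)) * ∑ i ∈ Finset.Ioc j n, (1 : ℝ) / i) ≤
        c' * (n : ℝ) ^ (-γ) := by
  obtain ⟨hR₀, hR₁⟩ := hR
  have hr : 0 < 1 - R := sub_pos.2 hR₁
  set C : ℝ := 1 + 2 * (s - γ)⁻¹ + (1 - R)⁻¹ + 2 * |c₂| / (1 - R) with hC
  have hC₀ : 0 < C := by
    have := sub_pos.2 hs
    positivity
  obtain ⟨N, hN⟩ := Filter.eventually_atTop.1 <|
    (tendsto_sub_mul_natCast_rpow_neg (1 - R) c₂ hγ.1).eventually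
      (Icc_mem_nhds (half_lt_self hr) (sub_lt_self 1 hR₀))
  refine ⟨C / (μs * R), div_pos hC₀ (mul_pos hμs hR₀), max N 1,
    fun n hn j hj Pe hmono hrange hlin hsmall => ?_⟩
  have hn₁ : 1 ≤ n := (le_max_right N 1).trans hn
  have hn₀ : (n : ℝ) ≠ 0 := by exact_mod_cast (zero_lt_one.trans_le hn₁).ne'
  have hdev : |1 - R - (1 - R - c₂ * (n : ℝ) ^ (-γ))| = |c₂| * (n : ℝ) ^ (-γ) := by
    rw [sub_sub_cancel, abs_mul, abs_of_nonneg (by positivity : 0 ≤ (n : ℝ) ^ (-γ))]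
  have hgap := intervalIntegral_div_self_sub_sum_Ioc_le hn₁ hγ.2 hs ⟨hr, by linarith⟩ hj
    (hN n ((le_max_left N 1).trans hn)) hmono hrange hlin hsmall
  rw [hdev, intervalIntegral.integral_of_le zero_le_one] at hgap
  set I := ∫ ε in Set.Ioc (0 : ℝ) 1, Pe ε / ε
  set S := ∑ i ∈ Finset.Ioc j n, (1 : ℝ) / i
  calc (n : ℝ) * (1 / (n * R) + (1 / (μs * n * R)) * I) -
        n * (1 / (n * R) + (1 / (μs * n * R)) * S) = (I - S) / (μs * R) := by field_simp; ring
    _ ≤ C * (n : ℝ) ^ (-γ) / (μs * R) := by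
        gcongr
        exact hgap.trans_eq (by rw [hC]; ring)
    _ = C / (μs * R) * (n : ℝ) ^ (-γ) := by ring

/-- **gap to optimum, Theorem 2 of the paper.** Let `γ ∈ (0,1]`,
`R ∈ (0,1)`, `c₂ > 0`, `μ_s > 0`. Then there are `c̃' > 0` and `n₀` such that for every
`n ≥ n₀` with `nR ∈ ℕ` and `n(1−R) = j` a positive integer, setting
`ε* = 1 − R − c₂ n^{−γ}`: for every admissible block error probability `P_e`, the
normalized gap between `T_K` (large-kernel polar code) and `T_MDS` is at most
`c̃' n^{−γ}`. -/
theorem gap_to_optimum_large_kernels (γ R c₂ μs : ℝ)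
    (hγ : γ ∈ Set.Ioc (0:ℝ) 1) (hR : R ∈ Set.Ioo (0:ℝ) 1)
    (hc₂ : 0 < c₂) (hμs : 0 < μs) :
    ∃ c' : ℝ, 0 < c' ∧ ∃ n₀ : ℕ, ∀ n : ℕ, n₀ ≤ n → (∃ k : ℕ, (k:ℝ) = (n:ℝ) * R) →
      ∀ j : ℕ, 0 < j → (j:ℝ) = (n:ℝ) * (1 - R) →
      ∀ εs : ℝ, εs = 1 - R - c₂ * (n:ℝ) ^ (-γ) →
      ∀ Pe : ℝ → ℝ, MonotoneOn Pe (Set.Icc (0:ℝ) 1) →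
        (∀ ε ∈ Set.Icc (0:ℝ) 1, Pe ε ∈ Set.Icc (0:ℝ) 1) →
        (∀ ε ∈ Set.Icc (0:ℝ) 1, Pe ε ≤ 1 - (1 - ε) ^ n) →
        Pe εs ≤ (n:ℝ) ^ (-(9:ℝ)) →
        (n:ℝ) * (1 / ((n:ℝ) * R) +
            (1 / (μs * (n:ℝ) * R)) * ∫ ε in Set.Ioc (0:ℝ) 1, Pe ε / ε) -
          (n:ℝ) * (1 / ((n:ℝ) * R) +
            (1 / (μs * (n:ℝ) * R)) * ∑ i ∈ Finset.Ioc j n, (1:ℝ) / i) ≤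
        c' * (n:ℝ) ^ (-γ) := by
  obtain ⟨c', hc', n₀, hgap⟩ :=
    gap_to_optimum_large_kernels_general γ R c₂ μs 9 hγ hR hμs (by linarith [hγ.2])
  exact ⟨c', hc', n₀, fun n hn _ j _ hj εs hεs Pe hmono hrange hunion hsmall =>
    hgap n hn j hj Pe hmono hrange
      (fun ε hε => (hunion ε hε).trans (one_sub_one_sub_pow_le_mul (by linarith [hε.2]) n))
      (hεs ▸ hsmall)⟩
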